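/- Let Y ⊂ P² be a set of C(d−1,2) − 1 points (d ≥ 5) that contains d subsets of d−3 collinear points arranged as the external vertices of a d-gon. Then the ideal I_Y ⊂ k[x,y,z] contains exactly one form of degree d−3 up to scalar, and contains no form of degree d−4. -/

import Mathlib

open Matrix MvPolynomial

noncomputable def det3 (a b c : Fin 3 → ℝ) : ℝ := (Matrix.of ![a, b, c]).det

/-!
Linear forms of distinct lines are non-associated primes, so a form of degree `e` divisible by
those of more than `e` lines is zero. This applies to the plane and to its dual. If `F` has degree
`e` and vanishes at more than `e` points of the line with coordinates `n`, put `G(y) = F(n × y)`.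
For each such point `q`, write `n = q × r`; then `n × y = (q · y) r - (r · y) q`, so on the dual
line `q · y = 0` the vector `n × y` is a multiple of `q` and the linear form of `q` divides `G`.
Hence `G = 0`. Substituting `y = x × u` with `n · u = 1` gives `F(x - (n · x) u) = 0`, so the linear
form of the line divides `F`.

The `d` edge-lines have `d (d - 3) = 2 |Y|` incidences with `Y`, and every point of `Y` lies on at
least two of them, hence on exactly two. So the edge-lines are distinct and the vertices of the
polygon are not in `Y`. A form of degree `d - 3` through `Y` that vanishes at one vertex vanishes at
`d - 2` points of an edge-line through it, so it contains that line and the next vertex, and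
going around the polygon it contains all `d` edge-lines, so it is zero. Therefore evaluation at one
vertex is injective on the forms of degree `d - 3` through `Y`, while a form of degree `d - 4`
through `Y` contains all edge-lines outright. Existence is a dimension count.
-/

open Configuration.ofField
open scoped LinearAlgebra.Projectivization

section LinearForm

section CommSemiring

variable {σ R : Type*} [Fintype σ] [CommSemiring R]

/-- The linear form `∑ i, n i * X i`, an equation of the hyperplane with coordinates `n`. -/
noncomputable def linearForm (n : σ → R) : MvPolynomial σ R :=
  (C ∘ n) ⬝ᵥ X

theorem eval_linearForm (n x : σ → R) : eval x (linearForm n) = n ⬝ᵥ x := by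
  simp [linearForm, dotProduct]

theorem coeff_single_linearForm (n : σ → R) (i : σ) :
    coeff (Finsupp.single i 1) (linearForm n) = n i := by
  classical
  simp [linearForm, dotProduct, coeff_sum, coeff_C_mul, coeff_X, Finsupp.single_left_inj]

theorem isHomogeneous_linearForm (n : σ → R) : (linearForm n).IsHomogeneous 1 :=
  IsHomogeneous.sum _ _ _ fun i _ => isHomogeneous_C_mul_X (n i) i

theorem linearForm_ne_zero {n : σ → R} (hn : n ≠ 0) : linearForm n ≠ 0 := by
  obtain ⟨i, hi⟩ := Function.ne_iff.1 hn
  exact ne_zero_iff.2 ⟨_, (coeff_single_linearForm n i).trans_ne hi⟩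

end CommSemiring

variable {σ K : Type*} [Fintype σ] [Field K]

theorem irreducible_linearForm {n : σ → K} (hn : n ≠ 0) : Irreducible (linearForm n) := by
  refine irreducible_of_totalDegree_eq_one
    ((isHomogeneous_linearForm n).totalDegree (linearForm_ne_zero hn)) fun x hx => ?_
  obtain ⟨i, hi⟩ := Function.ne_iff.1 hn
  have hxi := hx (Finsupp.single i 1)
  rw [coeff_single_linearForm] at hxi
  exact isUnit_of_dvd_unit hxi (isUnit_iff_ne_zero.2 hi)

theorem isRelPrime_linearForm_rep {p q : ℙ K (σ → K)} (hpq : p ≠ q) :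
    IsRelPrime (linearForm p.rep) (linearForm q.rep) := by
  have hp := irreducible_linearForm p.rep_nonzero
  have hq := irreducible_linearForm q.rep_nonzero
  refine hp.isRelPrime_iff_not_dvd.2 fun hdvd => hpq ?_
  obtain ⟨u, hu⟩ := hp.associated_of_dvd hq hdvd
  obtain ⟨c, -, hc⟩ := isUnit_iff_eq_C_of_isReduced.1 u.isUnit
  rw [← p.mk_rep, ← q.mk_rep, eq_comm, Projectivization.mk_eq_mk_iff']
  refine ⟨c, funext fun i => ?_⟩
  rw [← coeff_single_linearForm q.rep, ← hu, hc, mul_comm, coeff_C_mul,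
    coeff_single_linearForm, Pi.smul_apply, smul_eq_mul]

theorem eq_zero_of_forall_linearForm_rep_dvd {ι : Type*} [Fintype ι] {ℓ : ι → ℙ K (σ → K)}
    {F : MvPolynomial σ K} {e : ℕ} (hF : F.IsHomogeneous e) (hℓ : Function.Injective ℓ)
    (he : e < Fintype.card ι) (hdvd : ∀ i, linearForm (ℓ i).rep ∣ F) : F = 0 := by
  by_contra hF0
  have hprod : ∏ i, linearForm (ℓ i).rep ∣ F :=
    Finset.univ.prod_dvd_of_isRelPrime
      (fun _ _ _ _ hij => isRelPrime_linearForm_rep (hℓ.ne hij)) fun i _ => hdvd i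
  have hdeg : (∏ i, linearForm (ℓ i).rep).totalDegree = Fintype.card ι := by
    rw [(IsHomogeneous.prod Finset.univ _ (fun _ => 1)
        fun i _ => isHomogeneous_linearForm (ℓ i).rep).totalDegree
      (Finset.prod_ne_zero_iff.2 fun i _ => linearForm_ne_zero (ℓ i).rep_nonzero),
      ← Finset.card_eq_sum_ones, Finset.card_univ]
  have hle := totalDegree_le_of_dvd_of_isDomain hprod hF0
  rw [hdeg, hF.totalDegree hF0] at hle
  exact he.not_ge hle

end LinearForm

theorem dvd_aeval_sub_aeval {σ R A : Type*} [CommSemiring R] [CommRing A]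
    [Algebra R A] {a : A} {x y : σ → A} (h : ∀ i, a ∣ x i - y i)
    (F : MvPolynomial σ R) : a ∣ aeval x F - aeval y F := by
  simp only [← Ideal.mem_span_singleton, ← Ideal.Quotient.mk_eq_mk_iff_sub_mem] at h ⊢
  have hmk (z : σ → A) := map_aeval z (Ideal.Quotient.mk (Ideal.span {a})) F
  simp only [hmk, h]

theorem aeval_smul_of_isHomogeneous {σ R A : Type*} [CommSemiring R] [CommSemiring A]
    [Algebra R A] {F : MvPolynomial σ R} {e : ℕ} (hF : F.IsHomogeneous e)
    (c : A) (x : σ → A) : aeval (c • x) F = c ^ e * aeval x F := by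
  simp only [aeval_def, eval₂_eq, Finset.mul_sum, Pi.smul_apply, smul_eq_mul, mul_pow,
    Finset.prod_mul_distrib, Finset.prod_pow_eq_pow_sum]
  refine Finset.sum_congr rfl fun m hm => ?_
  rw [← hF.degree_eq_sum_deg_support hm]
  ring

theorem ringHom_comp_crossProduct {R S : Type*} [CommRing R] [CommRing S] (f : R →+* S)
    (a b : Fin 3 → R) : f ∘ crossProduct a b = crossProduct (f ∘ a) (f ∘ b) := by
  funext i
  fin_cases i <;> simp [cross_apply]

theorem isHomogeneous_aeval_crossProduct {R : Type*} [CommRing R] {F : MvPolynomial (Fin 3) R}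
    {e : ℕ} (hF : F.IsHomogeneous e) (n : Fin 3 → R) :
    (aeval (crossProduct (C ∘ n) X) F : MvPolynomial (Fin 3) R).IsHomogeneous e := by
  have hlin (i : Fin 3) :
      (crossProduct (C ∘ n) X i : MvPolynomial (Fin 3) R).IsHomogeneous 1 := by
    fin_cases i <;> exact (isHomogeneous_C_mul_X _ _).sub (isHomogeneous_C_mul_X _ _)
  simpa only [one_mul] using hF.aeval _ hlin

theorem aeval_aeval_crossProduct {R : Type*} [CommRing R] (F : MvPolynomial (Fin 3) R)
    (n : Fin 3 → R) (v : Fin 3 → MvPolynomial (Fin 3) R) :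
    aeval v (aeval (crossProduct (C ∘ n) X) F : MvPolynomial (Fin 3) R) =
      aeval (crossProduct (C ∘ n) v) F := by
  rw [← AlgHom.comp_apply, comp_aeval]
  congr 2
  funext i
  fin_cases i <;> simp [cross_apply]

section Plane

variable {K : Type*} [Field K]

theorem exists_dotProduct_eq_one {σ : Type*} [Fintype σ] {n : σ → K} (hn : n ≠ 0) :
    ∃ u, n ⬝ᵥ u = 1 := by
  obtain ⟨w, hw⟩ := not_forall.1 (mt (dotProduct_eq_zero_iff (v := n)).1 hn)
  exact ⟨(n ⬝ᵥ w)⁻¹ • w, by rw [dotProduct_smul, smul_eq_mul, inv_mul_cancel₀ hw]⟩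

theorem exists_crossProduct_eq {n q : Fin 3 → K} (hq : q ≠ 0) (hnq : n ⬝ᵥ q = 0) :
    ∃ r, crossProduct q r = n := by
  obtain ⟨u, hu⟩ := exists_dotProduct_eq_one hq
  exact ⟨crossProduct n u, by
    rw [cross_cross_eq_smul_sub_smul', hu, hnq, one_smul, zero_smul, sub_zero]⟩

theorem linearForm_dvd_aeval_crossProduct {F : MvPolynomial (Fin 3) K} {e : ℕ}
    (hF : F.IsHomogeneous e) {n q : Fin 3 → K} (hq : q ≠ 0) (hnq : n ⬝ᵥ q = 0)
    (hFq : eval q F = 0) : linearForm q ∣ aeval (crossProduct (C ∘ n) X) F := by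
  obtain ⟨r, rfl⟩ := exists_crossProduct_eq hq hnq
  have hcross : crossProduct (C ∘ crossProduct q r) X =
      linearForm q • (C ∘ r) - linearForm r • (C ∘ q) := by
    rw [ringHom_comp_crossProduct, cross_cross_eq_smul_sub_smul, linearForm, linearForm]
  have hdvd : linearForm q ∣ aeval (crossProduct (C ∘ crossProduct q r) X) F -
      aeval (-linearForm r • (C ∘ q)) F :=
    dvd_aeval_sub_aeval (fun i => ⟨C (r i), by simp [hcross]⟩) F
  have hzero : aeval (-linearForm r • (C ∘ q)) F = (0 : MvPolynomial (Fin 3) K) := by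
    have hCq : aeval (C ∘ q) F = (C (eval q F) : MvPolynomial (Fin 3) K) :=
      aeval_algebraMap_apply (MvPolynomial (Fin 3) K) q F
    rw [aeval_smul_of_isHomogeneous hF, hCq, hFq, map_zero, mul_zero]
  rwa [hzero, sub_zero] at hdvd

theorem linearForm_dvd_of_aeval_crossProduct_eq_zero {F : MvPolynomial (Fin 3) K} {n : Fin 3 → K}
    (hn : n ≠ 0) (hF : aeval (crossProduct (C ∘ n) X) F = (0 : MvPolynomial (Fin 3) K)) :
    linearForm n ∣ F := by
  obtain ⟨u, hu⟩ := exists_dotProduct_eq_one hn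
  have hproj : crossProduct (C ∘ n) (crossProduct X (C ∘ u)) =
      (X - linearForm n • (C ∘ u) : Fin 3 → MvPolynomial (Fin 3) K) := by
    have hCu : (C ∘ n) ⬝ᵥ (C ∘ u) = (1 : MvPolynomial (Fin 3) K) := by
      rw [← RingHom.map_dotProduct, hu, map_one]
    rw [cross_cross_eq_smul_sub_smul', hCu, one_smul, dotProduct_comm, linearForm]
  have hzero : aeval (X - linearForm n • (C ∘ u)) F = (0 : MvPolynomial (Fin 3) K) := by
    rw [← hproj, ← aeval_aeval_crossProduct, hF, map_zero]
  have hdvd : linearForm n ∣ aeval X F - aeval (X - linearForm n • (C ∘ u)) F :=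
    dvd_aeval_sub_aeval (fun i => ⟨C (u i), by simp⟩) F
  rwa [hzero, sub_zero, aeval_X_left_apply] at hdvd

theorem mem_projectivization_mk_iff {p : ℙ K (Fin 3 → K)} {n : Fin 3 → K} (hn : n ≠ 0) :
    p ∈ Projectivization.mk K n hn ↔ n ⬝ᵥ p.rep = 0 := by
  rw [mem_iff, dotProduct_comm, ← Projectivization.orthogonal_mk p.rep_nonzero hn, p.mk_rep]

theorem mem_iff_rep_dotProduct_rep {p ℓ : ℙ K (Fin 3 → K)} : p ∈ ℓ ↔ ℓ.rep ⬝ᵥ p.rep = 0 := by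
  rw [← mem_projectivization_mk_iff ℓ.rep_nonzero, ℓ.mk_rep]

theorem exists_mem_and_mem_of_ne {ℓ ℓ' : ℙ K (Fin 3 → K)} (h : ℓ ≠ ℓ') : ∃ p, p ∈ ℓ ∧ p ∈ ℓ' := by
  classical
  exact ⟨_, Configuration.HasPoints.mkPoint_ax (P := ℙ K (Fin 3 → K)) h⟩

theorem linearForm_rep_dvd_of_lt_card {F : MvPolynomial (Fin 3) K} {e : ℕ}
    (hF : F.IsHomogeneous e) {ℓ : ℙ K (Fin 3 → K)} {S : Finset (ℙ K (Fin 3 → K))}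
    (hS : e < S.card) (hSℓ : ∀ q ∈ S, q ∈ ℓ) (hFS : ∀ q ∈ S, eval q.rep F = 0) :
    linearForm ℓ.rep ∣ F := by
  refine linearForm_dvd_of_aeval_crossProduct_eq_zero ℓ.rep_nonzero
    (eq_zero_of_forall_linearForm_rep_dvd (isHomogeneous_aeval_crossProduct hF ℓ.rep)
      (Subtype.val_injective (p := (· ∈ S))) (by rwa [Fintype.card_coe]) fun q =>
        linearForm_dvd_aeval_crossProduct hF q.1.rep_nonzero
          (mem_iff_rep_dotProduct_rep.1 (hSℓ q q.2)) (hFS q q.2))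

theorem eval_eq_zero_of_linearForm_rep_dvd {F : MvPolynomial (Fin 3) K} {p ℓ : ℙ K (Fin 3 → K)}
    (hF : linearForm ℓ.rep ∣ F) (hp : p ∈ ℓ) : eval p.rep F = 0 := by
  obtain ⟨G, rfl⟩ := hF
  rw [map_mul, eval_linearForm, mem_iff_rep_dotProduct_rep.1 hp, zero_mul]

end Plane

theorem finrank_homogeneousSubmodule (σ R : Type*) [Fintype σ] [CommRing R] [Nontrivial R] (e : ℕ) :
    Module.finrank R (homogeneousSubmodule σ R e) = (Fintype.card σ + e - 1).choose e := by
  classical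
  have hset : {m : σ →₀ ℕ | m.degree = e} = (Finset.univ.finsuppAntidiag e : Finset (σ →₀ ℕ)) := by
    ext m
    simp [Finsupp.degree_eq_sum]
  rw [homogeneousSubmodule_eq_finsupp_supported, hset,
    (AddMonoidAlgebra.supportedEquivFinsupp _).finrank_eq, Module.finrank_finsupp_self,
    ← Nat.card_eq_fintype_card, Nat.card_coe_set_eq, Set.ncard_coe_finset,
    Finset.card_finsuppAntidiag_nat_eq_choose, Finset.card_univ]

theorem exists_isHomogeneous_forall_eval_eq_zero {σ ι K : Type*} [Fintype σ] [Fintype ι] [Field K]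
    {e : ℕ} (x : ι → σ → K) (hι : Fintype.card ι < (Fintype.card σ + e - 1).choose e) :
    ∃ F : MvPolynomial σ K, F ≠ 0 ∧ F.IsHomogeneous e ∧ ∀ i, eval (x i) F = 0 := by
  let evalAll : homogeneousSubmodule σ K e →ₗ[K] ι → K :=
    LinearMap.pi fun i => (aeval (x i)).toLinearMap ∘ₗ Submodule.subtype _
  have : Module.Finite K (homogeneousSubmodule σ K e) :=
    Module.Finite.iff_fg.2 (homogeneousSubmodule_fg σ K e)
  have hker : evalAll.ker ≠ ⊥ := LinearMap.ker_ne_bot_of_finrank_lt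
    (by rwa [Module.finrank_fintype_fun_eq_card, finrank_homogeneousSubmodule])
  obtain ⟨⟨F, hF⟩, hFker, hF0⟩ := Submodule.exists_mem_ne_zero_of_ne_bot hker
  exact ⟨F, by simpa using hF0, hF, fun i => congrFun (LinearMap.mem_ker.1 hFker) i⟩

section ExternalVertices

open SimpleGraph

variable {K ι : Type*} [Field K] [Fintype ι] {H : SimpleGraph ι} {ℓ : ι → ℙ K (Fin 3 → K)}
  {Y : Finset (ℙ K (Fin 3 → K))} {m : ℕ}

open scoped Classical in
/-- `Y` is the set of external vertices of a polygon with edge-lines `ℓ`: the common points of two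
edge-lines not adjacent in `H`, where `H` joins consecutive edges. Each edge-line contains `m`
points of `Y`, and `two_mul_card` expresses in terms of incidences that `Y` is as large as if no two
of these common points coincided. -/
structure IsExternalVertices (H : SimpleGraph ι) (ℓ : ι → ℙ K (Fin 3 → K))
    (Y : Finset (ℙ K (Fin 3 → K))) (m : ℕ) : Prop where
  mem_iff : ∀ q, q ∈ Y ↔ ∃ i j, Hᶜ.Adj i j ∧ q ∈ ℓ i ∧ q ∈ ℓ j
  card_filter_mem : ∀ i, (Y.filter (· ∈ ℓ i)).card = m
  two_mul_card : 2 * Y.card = Fintype.card ι * m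

namespace IsExternalVertices

open scoped Classical in
theorem card_edges_through (h : IsExternalVertices H ℓ Y m) {q : ℙ K (Fin 3 → K)} (hq : q ∈ Y) :
    (Finset.univ.filter (q ∈ ℓ ·)).card = 2 := by
  have htwo : ∀ q ∈ Y, 2 ≤ (Finset.univ.filter (q ∈ ℓ ·)).card := fun q hq => by
    obtain ⟨i, j, hij, hi, hj⟩ := (h.mem_iff q).1 hq
    rw [← Finset.card_pair hij.ne]
    exact Finset.card_le_card (by simp [Finset.insert_subset_iff, hi, hj])
  have hsum : ∑ _q ∈ Y, 2 = ∑ q ∈ Y, (Finset.univ.filter (q ∈ ℓ ·)).card := calc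
    ∑ _q ∈ Y, 2 = ∑ i, (Y.filter (· ∈ ℓ i)).card := by
      simp only [h.card_filter_mem, Finset.sum_const, smul_eq_mul, Finset.card_univ,
        ← h.two_mul_card, mul_comm]
    _ = ∑ q ∈ Y, (Finset.univ.filter (q ∈ ℓ ·)).card :=
      (Finset.sum_card_bipartiteAbove_eq_sum_card_bipartiteBelow _).symm
  exact ((Finset.sum_eq_sum_iff_of_le htwo).1 hsum q hq).symm

theorem eq_or_eq_of_mem (h : IsExternalVertices H ℓ Y m) {q : ℙ K (Fin 3 → K)} (hq : q ∈ Y)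
    {i j k : ι} (hij : i ≠ j) (hi : q ∈ ℓ i) (hj : q ∈ ℓ j) (hk : q ∈ ℓ k) : k = i ∨ k = j := by
  classical
  have hedges : {i, j} = Finset.univ.filter (q ∈ ℓ ·) :=
    Finset.eq_of_subset_of_card_le (by simp [Finset.insert_subset_iff, hi, hj])
      (by rw [h.card_edges_through hq, Finset.card_pair hij])
  have hmem : k ∈ Finset.univ.filter (q ∈ ℓ ·) := by simp [hk]
  simpa [← hedges] using hmem

theorem compl_adj_of_mem (h : IsExternalVertices H ℓ Y m) {q : ℙ K (Fin 3 → K)} (hq : q ∈ Y)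
    {i j : ι} (hij : i ≠ j) (hi : q ∈ ℓ i) (hj : q ∈ ℓ j) : Hᶜ.Adj i j := by
  obtain ⟨a, b, hab, ha, hb⟩ := (h.mem_iff q).1 hq
  rcases h.eq_or_eq_of_mem hq hab.ne ha hb hi with rfl | rfl <;>
    rcases h.eq_or_eq_of_mem hq hab.ne ha hb hj with rfl | rfl
  exacts [absurd rfl hij, hab, hab.symm, absurd rfl hij]

theorem injective (h : IsExternalVertices H ℓ Y m) (hm : m ≠ 0) (hι : 2 < Fintype.card ι) :
    Function.Injective ℓ := by
  classical
  intro i j hij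
  by_contra hne
  obtain ⟨q, hq⟩ := Finset.card_ne_zero.1 ((h.card_filter_mem i).trans_ne hm)
  obtain ⟨hqY, hqi⟩ := Finset.mem_filter.1 hq
  have hadj := h.compl_adj_of_mem hqY hne hqi (hij ▸ hqi)
  obtain ⟨k, -, hk⟩ := Finset.exists_mem_notMem_of_card_lt_card
    (s := {i, j}) (t := Finset.univ) (Finset.card_le_two.trans_lt hι)
  obtain ⟨p, hpi, hpk⟩ : ∃ p, p ∈ ℓ i ∧ p ∈ ℓ k := by
    rcases eq_or_ne (ℓ i) (ℓ k) with hik | hik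
    · exact ⟨q, hqi, hik ▸ hqi⟩
    · exact exists_mem_and_mem_of_ne hik
  have hpY := (h.mem_iff p).2 ⟨i, j, hadj, hpi, hij ▸ hpi⟩
  exact hk (by simpa using h.eq_or_eq_of_mem hpY hne hpi (hij ▸ hpi) hpk)

section Forms

variable {F : MvPolynomial (Fin 3) K}

theorem linearForm_dvd_of_lt (h : IsExternalVertices H ℓ Y m) {e : ℕ} (hF : F.IsHomogeneous e)
    (he : e < m) (hFY : ∀ q ∈ Y, eval q.rep F = 0) (i : ι) : linearForm (ℓ i).rep ∣ F := by
  classical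
  exact linearForm_rep_dvd_of_lt_card hF (S := Y.filter (· ∈ ℓ i))
    (he.trans_eq (h.card_filter_mem i).symm) (fun q hq => (Finset.mem_filter.1 hq).2)
    fun q hq => hFY q (Finset.mem_filter.1 hq).1

theorem linearForm_dvd_of_eval_vertex (h : IsExternalVertices H ℓ Y m) (hF : F.IsHomogeneous m)
    (hFY : ∀ q ∈ Y, eval q.rep F = 0) {i j : ι} (hij : H.Adj i j) {p : ℙ K (Fin 3 → K)}
    (hpi : p ∈ ℓ i) (hpj : p ∈ ℓ j) (hFp : eval p.rep F = 0) : linearForm (ℓ j).rep ∣ F := by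
  classical
  have hpY : p ∉ Y.filter (· ∈ ℓ j) := fun hp =>
    (h.compl_adj_of_mem (Finset.mem_filter.1 hp).1 hij.ne hpi hpj).2 hij
  refine linearForm_rep_dvd_of_lt_card hF (S := insert p (Y.filter (· ∈ ℓ j))) ?_ ?_ ?_
  · rw [Finset.card_insert_of_notMem hpY, h.card_filter_mem]
    exact m.lt_succ_self
  · exact Finset.forall_mem_insert _ _ _ |>.2 ⟨hpj, fun q hq => (Finset.mem_filter.1 hq).2⟩
  · exact Finset.forall_mem_insert _ _ _ |>.2 ⟨hFp, fun q hq => hFY q (Finset.mem_filter.1 hq).1⟩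

theorem linearForm_dvd_of_reachable (h : IsExternalVertices H ℓ Y m) (hℓ : Function.Injective ℓ)
    (hF : F.IsHomogeneous m) (hFY : ∀ q ∈ Y, eval q.rep F = 0) {i j : ι} (hij : H.Reachable i j)
    (hi : linearForm (ℓ i).rep ∣ F) : linearForm (ℓ j).rep ∣ F := by
  obtain ⟨walk⟩ := hij
  induction walk with
  | nil => exact hi
  | cons hadj _ ih =>
    obtain ⟨p, hp, hp'⟩ := exists_mem_and_mem_of_ne (hℓ.ne hadj.ne)
    exact ih (h.linearForm_dvd_of_eval_vertex hF hFY hadj hp hp'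
      (eval_eq_zero_of_linearForm_rep_dvd hi hp))

theorem eq_zero_of_eval_vertex_eq_zero (h : IsExternalVertices H ℓ Y m)
    (hℓ : Function.Injective ℓ) (hH : H.Preconnected) (hm : m < Fintype.card ι)
    (hF : F.IsHomogeneous m) (hFY : ∀ q ∈ Y, eval q.rep F = 0) {i j : ι} (hij : H.Adj i j)
    {p : ℙ K (Fin 3 → K)} (hpi : p ∈ ℓ i) (hpj : p ∈ ℓ j) (hFp : eval p.rep F = 0) : F = 0 :=
  eq_zero_of_forall_linearForm_rep_dvd hF hℓ hm fun k =>
    h.linearForm_dvd_of_reachable hℓ hF hFY (hH j k)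
      (h.linearForm_dvd_of_eval_vertex hF hFY hij hpi hpj hFp)

theorem exists_eq_smul [Nontrivial ι] (h : IsExternalVertices H ℓ Y m) (hℓ : Function.Injective ℓ)
    (hH : H.Preconnected) (hm : m < Fintype.card ι) {F G : MvPolynomial (Fin 3) K}
    (hF : F.IsHomogeneous m) (hFY : ∀ q ∈ Y, eval q.rep F = 0) (hF0 : F ≠ 0)
    (hG : G.IsHomogeneous m) (hGY : ∀ q ∈ Y, eval q.rep G = 0) : ∃ c : K, G = c • F := by
  inhabit ι
  obtain ⟨j, hij⟩ := hH.exists_adj_of_nontrivial default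
  obtain ⟨p, hpi, hpj⟩ := exists_mem_and_mem_of_ne (hℓ.ne hij.ne)
  have hzero {E : MvPolynomial (Fin 3) K} (hE : E.IsHomogeneous m)
      (hEY : ∀ q ∈ Y, eval q.rep E = 0) (hEp : eval p.rep E = 0) : E = 0 :=
    h.eq_zero_of_eval_vertex_eq_zero hℓ hH hm hE hEY hij hpi hpj hEp
  have hFp : eval p.rep F ≠ 0 := mt (hzero hF hFY) hF0
  refine ⟨eval p.rep G / eval p.rep F, sub_eq_zero.1 (hzero ?_ (fun q hq => ?_) ?_)⟩
  · exact (homogeneousSubmodule (Fin 3) K m).sub_mem hG (Submodule.smul_mem _ _ hF)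
  · rw [map_sub, smul_eval, hFY q hq, hGY q hq, mul_zero, sub_zero]
  · rw [map_sub, smul_eval, div_mul_cancel₀ _ hFp, sub_self]

end Forms

end IsExternalVertices

theorem compl_cycleGraph_adj {d : ℕ} (hd : 2 ≤ d) [NeZero d] {i j : Fin d} :
    (cycleGraph d)ᶜ.Adj i j ↔ i ≠ j ∧ j ≠ i + 1 ∧ i ≠ j + 1 := by
  obtain ⟨d, rfl⟩ := Nat.exists_eq_add_of_le' hd
  rw [compl_adj, cycleGraph_adj, sub_eq_iff_eq_add', sub_eq_iff_eq_add', not_or,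
    and_comm (a := ¬i = j + 1)]

theorem two_mul_choose_two_sub_one {d : ℕ} (hd : 3 ≤ d) :
    2 * ((d - 1).choose 2 - 1) = d * (d - 3) := by
  obtain ⟨d, rfl⟩ := Nat.exists_eq_add_of_le' hd
  have hchoose : 2 * (d + 2).choose 2 = (d + 2) * (d + 1) := by
    rw [Nat.choose_two_right, Nat.two_mul_div_two_of_even (Nat.even_mul_pred_self _)]
    rfl
  simp only [Nat.add_sub_cancel, Nat.add_succ_sub_one, Nat.mul_sub, hchoose]
  lia

theorem isExternalVertices_cycleGraph {d : ℕ} (hd : 3 ≤ d) [NeZero d] {n : Fin d → Fin 3 → K}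
    (hne : ∀ i, n i ≠ 0)
    (hmem : ∀ q, q ∈ Y ↔ ∃ i j : Fin d, i ≠ j ∧ j ≠ i + 1 ∧ i ≠ j + 1 ∧
        n i ⬝ᵥ q.rep = 0 ∧ n j ⬝ᵥ q.rep = 0)
    (hcard : Y.card = Nat.choose (d - 1) 2 - 1)
    (hline : ∀ i : Fin d, {q ∈ (Y : Set (ℙ K (Fin 3 → K))) | n i ⬝ᵥ q.rep = 0}.ncard = d - 3) :
    IsExternalVertices (cycleGraph d) (fun i => .mk K (n i) (hne i)) Y (d - 3) where
  mem_iff q := by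
    simp only [hmem, compl_cycleGraph_adj (by omega : 2 ≤ d), mem_projectivization_mk_iff,
      and_assoc]
  card_filter_mem i := by
    simp only [mem_projectivization_mk_iff, ← hline i, ← Set.ncard_coe_finset,
      Finset.coe_filter, Finset.mem_coe]
  two_mul_card := by rw [hcard, two_mul_choose_two_sub_one hd, Fintype.card_fin]

end ExternalVertices

theorem stmt13_general {K : Type*} [Field K] (d : ℕ) (hd : 4 ≤ d) [NeZero d]
    (n : Fin d → Fin 3 → K)
    (hne : ∀ i, n i ≠ 0)
    (Y : Set (Projectivization K (Fin 3 → K)))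
    (hYdef : Y = {q | ∃ i j : Fin d, i ≠ j ∧ j ≠ i + 1 ∧ i ≠ j + 1 ∧
        n i ⬝ᵥ q.rep = 0 ∧ n j ⬝ᵥ q.rep = 0})
    (hYcard : Y.ncard = Nat.choose (d - 1) 2 - 1)
    (hline : ∀ i : Fin d, {q ∈ Y | n i ⬝ᵥ q.rep = 0}.ncard = d - 3) :
    (∃ F : MvPolynomial (Fin 3) K, F ≠ 0 ∧ F.IsHomogeneous (d - 3) ∧
        ∀ q ∈ Y, eval q.rep F = 0) ∧
    (∀ F G : MvPolynomial (Fin 3) K, F ≠ 0 → F.IsHomogeneous (d - 3) →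
        (∀ q ∈ Y, eval q.rep F = 0) → G.IsHomogeneous (d - 3) →
        (∀ q ∈ Y, eval q.rep G = 0) → ∃ c : K, G = c • F) ∧
    (∀ F : MvPolynomial (Fin 3) K, F.IsHomogeneous (d - 4) →
        (∀ q ∈ Y, eval q.rep F = 0) → F = 0) := by
  have htwo := two_mul_choose_two_sub_one (d := d) (by omega)
  have hpos : 0 < d * (d - 3) := Nat.mul_pos (by omega) (by omega)
  lift Y to Finset (ℙ K (Fin 3 → K)) using Set.finite_of_ncard_ne_zero (by omega)
  rw [Set.ncard_coe_finset] at hYcard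
  have hY := isExternalVertices_cycleGraph (by omega) hne
    (fun q => by rw [← Finset.mem_coe, hYdef]; rfl) hYcard hline
  have hinj := hY.injective (by omega) (by rw [Fintype.card_fin]; omega)
  have : Nontrivial (Fin d) := Fin.nontrivial_iff_two_le.2 (by omega)
  refine ⟨?_, fun F G hF0 hF hFY hG hGY => ?_, fun F hF hFY => ?_⟩
  · have hdim : (Fintype.card (Fin 3) + (d - 3) - 1).choose (d - 3) = (d - 1).choose 2 := by
      rw [Fintype.card_fin, show 3 + (d - 3) - 1 = d - 1 by omega]
      exact Nat.choose_symm_of_eq_add (by omega)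
    obtain ⟨F, hF0, hF, hFY⟩ := exists_isHomogeneous_forall_eval_eq_zero (fun q : Y => q.1.rep)
      (by rw [Fintype.card_coe, hYcard, hdim]; omega)
    exact ⟨F, hF0, hF, fun q hq => hFY ⟨q, hq⟩⟩
  · exact hY.exists_eq_smul hinj SimpleGraph.cycleGraph_preconnected
      (by rw [Fintype.card_fin]; omega) hF hFY hF0 hG hGY
  · exact eq_zero_of_forall_linearForm_rep_dvd hF hinj (by rw [Fintype.card_fin]; omega)
      (hY.linearForm_dvd_of_lt hF (by omega) hFY)

theorem stmt13 (d : ℕ) (hd : 5 ≤ d) [NeZero d] (v n : Fin d → Fin 3 → ℝ)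
    (hn : ∀ m, n m = crossProduct (v m) (v (m + 1)))
    (hne : ∀ i, n i ≠ 0)
    (Y : Set (Projectivization ℝ (Fin 3 → ℝ)))
    (hYdef : Y = {q | ∃ i j : Fin d, i ≠ j ∧ j ≠ i + 1 ∧ i ≠ j + 1 ∧
        n i ⬝ᵥ q.rep = 0 ∧ n j ⬝ᵥ q.rep = 0})
    (hYcard : Y.ncard = Nat.choose (d - 1) 2 - 1)
    (hline : ∀ i : Fin d, {q ∈ Y | n i ⬝ᵥ q.rep = 0}.ncard = d - 3)
    (hcoll : ∀ L : Fin 3 → ℝ, L ≠ 0 → {q ∈ Y | L ⬝ᵥ q.rep = 0}.ncard ≤ d - 3) :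
    (∃ F : MvPolynomial (Fin 3) ℝ, F ≠ 0 ∧ F.IsHomogeneous (d - 3) ∧
        ∀ q ∈ Y, eval q.rep F = 0) ∧
    (∀ F G : MvPolynomial (Fin 3) ℝ, F ≠ 0 → F.IsHomogeneous (d - 3) →
        (∀ q ∈ Y, eval q.rep F = 0) → G.IsHomogeneous (d - 3) →
        (∀ q ∈ Y, eval q.rep G = 0) → ∃ c : ℝ, G = c • F) ∧
    (∀ F : MvPolynomial (Fin 3) ℝ, F.IsHomogeneous (d - 4) →
        (∀ q ∈ Y, eval q.rep F = 0) → F = 0) := by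
  exact stmt13_general d (by omega) n hne Y hYdef hYcard hline
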